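/- arXiv:0903.1532 — 3 statements merged into one kernel-verified Lean document; each statement's English description precedes it below -/
import Mathlib

section
/- The number of distinct global orbit patterns realized by functions in F_N is exactly 2^N − 1; that is, the set G(F_N) = { gop(f) : f ∈ F_N } has cardinality 2^N − 1. -/
/-!
A list of natural numbers is a global orbit pattern on `N` points if and only if it is nonempty,
its entries are positive and its sum is at most `N`.

*Necessity.* The point `0` is the least element of its component, so the pattern is nonempty. If
`x` ranges over the least elements of components and `i < ω(x, f)`, the points `f^i(x)` are
pairwise distinct: different components are disjoint, and a coincidence `f^i(x) = f^j(x)` with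
`i < j` would force `ω(x, f) ≤ j - i`. Hence the orders sum to at most `N` (`gop_sum_le`).

*Sufficiency.* Given such a list `l`, cut `{0, …, l.sum - 1}` into consecutive blocks whose lengths
are the entries of `l`, let `f` rotate each block cyclically, and send all remaining points to `0`.
The least elements of the components are then exactly the left ends of the blocks
(`exists_gop_eq`).

*Counting.* Deleting the last block is a bijection from the compositions of `N + 1` to the
lists of positive integers with sum at most `N`, so there are `2 ^ N` of the latter; discarding the
empty list leaves `2 ^ N - 1`.
-/

open scoped Classical

/-- Two points are in the same component of `X_N` under `f`:
`x ~ y` iff some forward iterate of `x` equals some forward iterate of `y`. -/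
def sameComp {N : ℕ} (f : Fin N → Fin N) (x y : Fin N) : Prop :=
  ∃ k l : ℕ, f^[k] x = f^[l] y

/-- The order `ω(x, f)` of a point `x`: the length of the periodic cycle contained in
the component of `x`, i.e. the least `p > 0` such that the orbit of `x` is eventually
`p`-periodic. -/
noncomputable def gopOrd {N : ℕ} (f : Fin N → Fin N) (x : Fin N) : ℕ :=
  sInf {p : ℕ | 0 < p ∧ ∃ K : ℕ, f^[K + p] x = f^[K] x}

/-- The global orbit pattern of `f`: the list of orders of the least elements of the
components of `X_N` under `f`, listed in increasing order of those least elements. -/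
noncomputable def gop {N : ℕ} (f : Fin N → Fin N) : List ℕ :=
  ((Finset.univ.filter (fun x : Fin N => ∀ y : Fin N, sameComp f x y → x ≤ y)).sort (· ≤ ·)).map
    (gopOrd f)

/-! ### Necessity -/

lemma gopOrd_mem {N : ℕ} (f : Fin N → Fin N) (x : Fin N) :
    gopOrd f x ∈ {p : ℕ | 0 < p ∧ ∃ K : ℕ, f^[K + p] x = f^[K] x} := by
  apply Nat.sInf_mem
  obtain ⟨a, b, hab, h⟩ := Finite.exists_ne_map_eq_of_infinite (fun k : ℕ => f^[k] x)
  rcases lt_or_gt_of_ne hab with hlt | hlt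
  · exact ⟨b - a, by omega, a, by rw [Nat.add_sub_cancel' hlt.le, h]⟩
  · exact ⟨a - b, by omega, b, by rw [Nat.add_sub_cancel' hlt.le, h]⟩

lemma iterate_ne_of_lt_gopOrd {N : ℕ} (f : Fin N → Fin N) (x : Fin N) {i j : ℕ} (hij : i < j)
    (hj : j < gopOrd f x) : f^[i] x ≠ f^[j] x := by
  intro h
  have : gopOrd f x ≤ j - i :=
    Nat.sInf_le ⟨by omega, i, by rw [Nat.add_sub_cancel' hij.le, h]⟩
  omega

lemma gop_ne_nil {N : ℕ} (hN : 0 < N) (f : Fin N → Fin N) : gop f ≠ [] := by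
  have h0 : (⟨0, hN⟩ : Fin N) ∈
      (Finset.univ.filter (fun x : Fin N => ∀ y : Fin N, sameComp f x y → x ≤ y)) := by
    exact Finset.mem_filter.2 ⟨Finset.mem_univ _, fun y _ => Fin.le_def.2 (Nat.zero_le _)⟩
  intro h
  rw [gop, List.map_eq_nil_iff] at h
  have h1 := (Finset.mem_sort (· ≤ ·)).2 h0
  rw [h] at h1
  simp at h1

lemma gop_pos {N : ℕ} (f : Fin N → Fin N) : ∀ p ∈ gop f, 0 < p := by
  intro p hp
  obtain ⟨x, -, rfl⟩ := List.mem_map.1 hp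
  exact (gopOrd_mem f x).1

/-- The initial orbit segments `x, f x, …, f^(ω(x, f) - 1) x` of the least elements `x` of the
components are injective and pairwise disjoint. -/
lemma gop_sum_le {N : ℕ} (f : Fin N → Fin N) : (gop f).sum ≤ N := by
  set M := Finset.univ.filter (fun x : Fin N => ∀ y : Fin N, sameComp f x y → x ≤ y) with hM
  have h1 : (gop f).sum = ∑ x ∈ M, gopOrd f x := by
    rw [gop, ← hM, Finset.sum_eq_multiset_sum]
    conv_rhs => rw [← Finset.sort_eq M (· ≤ ·)]
    rw [Multiset.map_coe, Multiset.sum_coe]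
  have h2 : (M.sigma (fun x => Finset.range (gopOrd f x))).card ≤
      (Finset.univ : Finset (Fin N)).card := by
    apply Finset.card_le_card_of_injOn (fun q => f^[q.2] q.1) (by simp)
    rintro ⟨x, i⟩ hx ⟨y, j⟩ hy h
    simp only [Finset.coe_sigma, Set.mem_sigma_iff, Finset.mem_coe, Finset.mem_range, hM,
      Finset.mem_filter, Finset.mem_univ, true_and] at hx hy h
    obtain rfl : x = y := le_antisymm (hx.1 y ⟨i, j, h⟩) (hy.1 x ⟨j, i, h.symm⟩)
    rcases lt_trichotomy i j with hij | rfl | hij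
    · exact absurd h (iterate_ne_of_lt_gopOrd f x hij hy.2)
    · rfl
    · exact absurd h.symm (iterate_ne_of_lt_gopOrd f x hij hx.2)
  rw [h1]
  simpa using h2

/-! ### Sufficiency -/

lemma gopOrd_eq_of_cycle {N : ℕ} (f : Fin N → Fin N) (x : Fin N) (p : ℕ) (hp : 0 < p)
    (hper : f^[p] x = x) (hne : ∀ q, 0 < q → q < p → f^[q] x ≠ x) : gopOrd f x = p := by
  apply le_antisymm
  · exact Nat.sInf_le ⟨hp, 0, by simpa using hper⟩
  · obtain ⟨h0, K, hK⟩ := gopOrd_mem f x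
    by_contra hlt
    apply hne _ h0 (not_le.1 hlt)
    have hcyc : f^[p * K] x = x := by
      rw [Function.iterate_mul]
      exact Function.iterate_fixed hper K
    -- Advancing by `p * K - K` more steps brings the coincidence at time `K` back to `x`.
    have hKp : K ≤ p * K := Nat.le_mul_of_pos_left K hp
    have h := congrArg (f^[p * K - K]) hK
    rw [← Function.iterate_add_apply, ← Function.iterate_add_apply, ← add_assoc,
      Nat.sub_add_cancel hKp, hcyc, add_comm, Function.iterate_add_apply, hcyc] at h
    exact h

/-- If `idx` is constant along orbits and `start i` is the least point of index `i`, lying in the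
same component as every other point of index `i`, then the points `start i` are the least elements
of the components. -/
lemma gop_eq_of_index {N m : ℕ} (f : Fin N → Fin N) (start : Fin m → Fin N) (idx : Fin N → Fin m)
    (hmono : StrictMono start) (hinv : ∀ x, idx (f x) = idx x) (hidx : ∀ i, idx (start i) = i)
    (hle : ∀ x, start (idx x) ≤ x) (hcomp : ∀ x, sameComp f x (start (idx x))) :
    gop f = List.ofFn (fun i => gopOrd f (start i)) := by
  have hit : ∀ k x, idx (f^[k] x) = idx x := by
    intro k
    induction k with
    | zero => intro x; rfl
    | succ k ih => intro x; rw [Function.iterate_succ_apply, ih, hinv]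
  have hset : Finset.univ.filter (fun x : Fin N => ∀ y : Fin N, sameComp f x y → x ≤ y) =
      (List.ofFn start).toFinset := by
    ext x
    simp only [Finset.mem_filter, Finset.mem_univ, true_and, List.mem_toFinset, List.mem_ofFn]
    constructor
    · intro h
      exact ⟨idx x, le_antisymm (hle x) (h _ (hcomp x))⟩
    · rintro ⟨i, rfl⟩ y ⟨k, l, hkl⟩
      have := congrArg idx hkl
      rw [hit, hit, hidx] at this
      rw [this]
      exact hle y
  have hsort : (List.ofFn start).toFinset.sort (· ≤ ·) = List.ofFn start := by
    rw [List.toFinset_sort]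
    · exact List.pairwise_ofFn.2 fun i j hij => (hmono hij).le
    · exact List.nodup_ofFn.2 hmono.injective
  rw [gop, hset, hsort, List.map_ofFn]
  rfl

lemma exists_block (s : ℕ → ℕ) (h0 : s 0 = 0) (m x : ℕ) (hx : x < s m) :
    ∃ i < m, s i ≤ x ∧ x < s (i + 1) := by
  induction m with
  | zero => omega
  | succ m ih =>
    by_cases h : x < s m
    · obtain ⟨i, hi, h⟩ := ih h
      exact ⟨i, by omega, h⟩
    · exact ⟨m, by omega, by omega, hx⟩

/-- Block rotation realizes `l`: the `i`-th block is `[s i, s (i + 1))` where `s i` is the sum of the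
first `i` entries of `l`, and points beyond the last block are sent to `0`. -/
lemma exists_gop_eq {N : ℕ} (hN : 0 < N) (l : List ℕ) (hne : l ≠ []) (hpos : ∀ p ∈ l, 0 < p)
    (hsum : l.sum ≤ N) : ∃ f : Fin N → Fin N, gop f = l := by
  set s : ℕ → ℕ := fun i => (l.take i).sum with hs
  have hm : 0 < l.length := List.length_pos_iff.2 hne
  have s0 : s 0 = 0 := by simp [hs]
  have sm : s l.length = l.sum := by simp [hs]
  have ssucc : ∀ i (hi : i < l.length), s (i + 1) = s i + l[i] := by
    intro i hi
    simp [hs, List.sum_take_succ _ _ hi]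
  have spos : ∀ i (hi : i < l.length), 0 < l[i] := fun i hi => hpos _ (List.getElem_mem hi)
  have smono : Monotone s := fun i j hij => (List.take_sublist_take_left hij).sum_le_sum (by simp)
  have slt : ∀ i j, i < j → j ≤ l.length → s i < s j := by
    intro i j hij hj
    have h1 := ssucc i (by omega)
    have h2 := spos i (by omega)
    have h3 := smono (show i + 1 ≤ j by omega)
    omega
  have sle : ∀ i, i ≤ l.length → s i ≤ N := fun i hi =>
    (smono hi).trans (by rw [sm]; exact hsum)
  have hex : ∀ x : ℕ, ∃ i : Fin l.length, (x < l.sum → s i ≤ x ∧ x < s (i + 1)) ∧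
      (¬ x < l.sum → (i : ℕ) = 0) := by
    intro x
    by_cases hx : x < l.sum
    · obtain ⟨i, hi, h⟩ := exists_block s s0 l.length x (by rwa [sm])
      exact ⟨⟨i, hi⟩, fun _ => h, fun h => absurd hx h⟩
    · exact ⟨⟨0, hm⟩, fun h => absurd h hx, fun _ => rfl⟩
  choose idx hidx1 hidx2 using hex
  have idx_eq : ∀ (i : Fin l.length) (x : ℕ), s i ≤ x → x < s (i + 1) → idx x = i := by
    intro i x h1 h2
    have hx : x < l.sum := by
      rw [← sm]
      exact h2.trans_le (smono i.2)
    obtain ⟨h3, h4⟩ := hidx1 x hx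
    apply Fin.ext
    by_contra hcon
    rcases lt_or_gt_of_ne hcon with h | h
    · have := smono (show (idx x : ℕ) + 1 ≤ i from h)
      omega
    · have := smono (show (i : ℕ) + 1 ≤ idx x from h)
      omega
  -- The map at the level of natural numbers.
  let g : ℕ → ℕ := fun x =>
    if x < l.sum then (if x + 1 = s (idx x + 1) then s (idx x) else x + 1) else 0
  have hg : ∀ x, g x < N := by
    intro x
    simp only [g]
    have h1 := slt (idx x) (idx x + 1) (by omega) (idx x).2
    have h2 := sle (idx x + 1) (idx x).2
    split_ifs with h3 h4
    · omega
    · have := hidx1 x h3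
      omega
    · exact hN
  let f : Fin N → Fin N := fun x => ⟨g x, hg x⟩
  let start : Fin l.length → Fin N := fun i =>
    ⟨s i, (slt i (i + 1) (by omega) i.2).trans_le (sle _ i.2)⟩
  have hit : ∀ (i : Fin l.length) (k : ℕ), k < l[i] → (f^[k] (start i) : ℕ) = s i + k := by
    intro i k
    induction k with
    | zero => intro _; rfl
    | succ k ih =>
      intro hk
      have hss := ssucc i i.2
      have hk' : k + 1 < l[(i : ℕ)] := hk
      have h := ih (by omega)
      rw [Function.iterate_succ_apply']
      simp only [f, g]
      rw [h, idx_eq i (s i + k) (by omega) (by omega), if_pos, if_neg]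
      · omega
      · omega
      · have := smono (show (i : ℕ) + 1 ≤ l.length from i.2)
        omega
  have hper : ∀ i : Fin l.length, f^[l[i]] (start i) = start i := by
    intro i
    have hss := ssucc i i.2
    have hp := spos i i.2
    obtain ⟨k, hk⟩ : ∃ k, l[i] = k + 1 := ⟨l[i] - 1, by
      have : 0 < l[i] := hp
      omega⟩
    have hk' : l[(i : ℕ)] = k + 1 := hk
    have h := hit i k (by omega)
    rw [hk, Function.iterate_succ_apply']
    apply Fin.ext
    simp only [f, g, start]
    rw [h, idx_eq i (s i + k) (by omega) (by omega), if_pos, if_pos]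
    · omega
    · have := smono (show (i : ℕ) + 1 ≤ l.length from i.2)
      omega
  refine ⟨f, ?_⟩
  rw [gop_eq_of_index f start (fun x => idx x)]
  · have hord : ∀ i : Fin l.length, gopOrd f (start i) = l[i] := by
      intro i
      apply gopOrd_eq_of_cycle f _ _ (spos i i.2) (hper i)
      intro q hq0 hq h
      have h1 := hit i q hq
      rw [h] at h1
      simp only [start] at h1
      omega
    simp only [hord]
    exact List.ofFn_getElem
  · intro i j hij
    exact slt i j hij j.2.le
  · intro x
    have h1 := slt (idx x) (idx x + 1) (by omega) (idx x).2
    simp only [f, g]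
    split_ifs with h2 h3
    · exact idx_eq _ _ le_rfl h1
    · have := hidx1 x h2
      exact idx_eq _ _ (by omega) (by omega)
    · have h3 := hidx2 x h2
      exact idx_eq _ _ (by rw [h3, s0]) (by omega)
  · intro i
    exact idx_eq _ _ le_rfl (slt i (i + 1) (by omega) i.2)
  · intro x
    rw [Fin.le_def]
    simp only [start]
    by_cases hx : (x : ℕ) < l.sum
    · exact (hidx1 x hx).1
    · rw [hidx2 x hx, s0]
      exact Nat.zero_le _
  · intro x
    by_cases hx : (x : ℕ) < l.sum
    · obtain ⟨h1, h2⟩ := hidx1 x hx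
      refine ⟨0, x - s (idx x), ?_⟩
      apply Fin.ext
      rw [hit]
      · simp only [Function.iterate_zero, id]
        omega
      · have := ssucc (idx x) (idx x).2
        show (x : ℕ) - s (idx x) < l[(idx x : ℕ)]
        omega
    · refine ⟨1, 0, ?_⟩
      apply Fin.ext
      simp only [Function.iterate_one, Function.iterate_zero, id, f, g, start]
      rw [if_neg hx, hidx2 x hx, s0]

/-! ### Counting -/

/-- Deleting the last block identifies compositions of `N + 1` with these lists. -/
lemma ncard_lists_sum_le (N : ℕ) :
    {l : List ℕ | (∀ p ∈ l, 0 < p) ∧ l.sum ≤ N}.ncard = 2 ^ N := by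
  have hlast : ∀ c : Composition (N + 1), ∃ a, 0 < a ∧ c.blocks = c.blocks.dropLast ++ [a] ∧
      c.blocks.dropLast.sum + a = N + 1 := by
    intro c
    have hc : c.blocks ≠ [] := by
      intro h
      have := c.blocks_sum
      simp [h] at this
    have hd := List.dropLast_append_getLast hc
    refine ⟨c.blocks.getLast hc, c.blocks_pos (List.getLast_mem hc), hd.symm, ?_⟩
    have := congrArg List.sum hd
    rw [c.blocks_sum] at this
    simpa using this
  have hinj : Function.Injective (fun c : Composition (N + 1) => c.blocks.dropLast) := by
    intro c d h
    simp only at h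
    obtain ⟨a, -, hc, hca⟩ := hlast c
    obtain ⟨b, -, hd, hdb⟩ := hlast d
    apply Composition.ext
    rw [h] at hca
    rw [hc, hd, h, show a = b by omega]
  have himage : {l : List ℕ | (∀ p ∈ l, 0 < p) ∧ l.sum ≤ N} =
      Set.image (fun c : Composition (N + 1) => c.blocks.dropLast) Set.univ := by
    ext l
    simp only [Set.mem_ofPred_eq, Set.image_univ, Set.mem_range]
    constructor
    · rintro ⟨hpos, hsum⟩
      refine ⟨⟨l ++ [N + 1 - l.sum], ?_, ?_⟩, by simp⟩
      · intro i hi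
        rcases List.mem_append.1 hi with hi | hi
        · exact hpos i hi
        · rw [List.mem_singleton.1 hi]
          omega
      · rw [List.sum_append, List.sum_singleton]
        omega
    · rintro ⟨c, rfl⟩
      obtain ⟨a, ha, -, hca⟩ := hlast c
      exact ⟨fun p hp => c.blocks_pos (List.mem_of_mem_dropLast hp), by omega⟩
  rw [himage, Set.ncard_image_of_injective _ hinj, Set.ncard_univ, Nat.card_eq_fintype_card,
    composition_card, Nat.add_sub_cancel]

/-- the set `G(F_N) = { gop f : f ∈ F_N }` of global orbit patterns realized
by functions in `F_N` has cardinality exactly `2^N − 1`. -/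
theorem ncard_range_gop (N : ℕ) (hN : 0 < N) :
    (Set.range (fun f : Fin N → Fin N => gop f)).ncard = 2 ^ N - 1 := by
  have hrange : Set.range (fun f : Fin N → Fin N => gop f) =
      {l : List ℕ | (∀ p ∈ l, 0 < p) ∧ l.sum ≤ N} \ {[]} := by
    ext l
    constructor
    · rintro ⟨f, rfl⟩
      exact ⟨⟨gop_pos f, gop_sum_le f⟩, gop_ne_nil hN f⟩
    · rintro ⟨⟨hpos, hsum⟩, hne⟩
      exact exists_gop_eq hN l hne hpos hsum
  rw [hrange, Set.ncard_sdiff_singleton_of_mem (by simp), ncard_lists_sum_le]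
end

section
/- Let A_M(j) denote the number of functions g on {0,…,M−1} whose global orbit pattern is the sequence of j ones (i.e., g has exactly j fixed points and no periodic point of period greater than 1). Then for every integer k with 1 ≤ k ≤ N−1, A_N(k) = C(N, k) · Σ_{p=1}^{N−k} k^p · A_{N−k}(p). -/
/-!
A function has gop `[1, …, 1]` (`j` ones) exactly when every point is eventually mapped to a
fixed point and there are `j` fixed points (`gop_eq_replicate_iff`): each component then contains
exactly one fixed point, so the least elements of components are in bijection with fixed points.

The recursion comes from deleting the fixed points. Let `S` be the set of fixed points of such an
`f`, with `|S| = k`. On the complement of `S` define `g x = f x` if `f x ∉ S` and `g x = x`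
otherwise. Then `g` is again eventually fixed, its fixed points are the points outside `S` that `f`
sends into `S`, and `f` is recovered from `S`, `g` and the map `h : Fix g → S` that `f` induces.
All triples `(S, g, h)` occur (`glue_bijective`). There are `C(N, k)` choices of `S`, and a `g` with
`p` fixed points allows `k ^ p` choices of `h`; since the complement of `S` is nonempty, `p` runs
from `1` to `N - k`.
-/

open scoped Classical

/-- `A_M(j)`: the number of functions on `{0,…,M−1}` whose global orbit pattern is the
sequence of `j` ones. -/
noncomputable def A (M j : ℕ) : ℕ :=
  Nat.card {g : Fin M → Fin M // gop g = List.replicate j 1}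

/-- Every point is mapped to a fixed point by some iterate of `f`. On a finite set this says that
`f` has no periodic point of period greater than one. -/
def EvFix {α : Type*} (f : α → α) : Prop :=
  ∀ x, ∃ n : ℕ, f (f^[n] x) = f^[n] x

/-! ### Orbit patterns consisting of ones -/

lemma sameComp_trans {N : ℕ} {f : Fin N → Fin N} {x y z : Fin N}
    (h₁ : sameComp f x y) (h₂ : sameComp f y z) : sameComp f x z := by
  obtain ⟨a, b, hab⟩ := h₁
  obtain ⟨c, d, hcd⟩ := h₂
  refine ⟨c + a, b + d, ?_⟩
  rw [Function.iterate_add_apply, hab, ← Function.iterate_add_apply, add_comm c b,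
    Function.iterate_add_apply, hcd, ← Function.iterate_add_apply]

lemma sameComp_symm {N : ℕ} {f : Fin N → Fin N} {x y : Fin N}
    (h : sameComp f x y) : sameComp f y x := by
  obtain ⟨a, b, hab⟩ := h
  exact ⟨b, a, hab.symm⟩

lemma exists_least_sameComp {N : ℕ} (f : Fin N → Fin N) (x : Fin N) :
    ∃ r, (∀ y, sameComp f r y → r ≤ y) ∧ sameComp f r x := by
  obtain ⟨r, hr, hmin⟩ := (Finset.univ.filter (fun y => sameComp f x y)).exists_min_image id
    ⟨x, by simpa using ⟨0, 0, rfl⟩⟩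
  simp only [Finset.mem_filter, Finset.mem_univ, true_and, id] at hr hmin
  exact ⟨r, fun y hy => hmin y (sameComp_trans hr hy), sameComp_symm hr⟩

lemma gopOrd_eq_one_iff {N : ℕ} (f : Fin N → Fin N) (x : Fin N) :
    gopOrd f x = 1 ↔ ∃ n : ℕ, f (f^[n] x) = f^[n] x := by
  unfold gopOrd
  constructor
  · intro h
    have hne : {p : ℕ | 0 < p ∧ ∃ K : ℕ, f^[K + p] x = f^[K] x}.Nonempty := by
      by_contra hne
      rw [Set.not_nonempty_iff_eq_empty] at hne
      rw [hne] at h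
      simp at h
    have hm := Nat.sInf_mem hne
    rw [h] at hm
    obtain ⟨-, K, hK⟩ := hm
    exact ⟨K, by rw [← Function.iterate_succ_apply' f K x]; exact hK⟩
  · rintro ⟨n, hn⟩
    have h1 : 1 ∈ {p : ℕ | 0 < p ∧ ∃ K : ℕ, f^[K + p] x = f^[K] x} :=
      ⟨one_pos, n, by rw [Function.iterate_succ_apply']; exact hn⟩
    have h2 := Nat.sInf_mem ⟨1, h1⟩
    exact le_antisymm (Nat.sInf_le h1) h2.1

lemma iterate_add_of_fixed {α : Type*} {f : α → α} {x : α} {n : ℕ}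
    (h : f (f^[n] x) = f^[n] x) (m : ℕ) : f^[m + n] x = f^[n] x := by
  rw [Function.iterate_add_apply]
  exact Function.iterate_fixed h m

lemma card_least_eq_card_fixed {N : ℕ} {f : Fin N → Fin N} (hf : EvFix f) :
    (Finset.univ.filter (fun x : Fin N => ∀ y : Fin N, sameComp f x y → x ≤ y)).card =
      Nat.card {x // f x = x} := by
  rw [Nat.card_eq_fintype_card, Fintype.card_subtype]
  choose t ht using hf
  refine Finset.card_bij (fun x _ => f^[t x] x) ?_ ?_ ?_
  · intro x _
    simpa using ht x
  · intro x hx y hy hxy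
    simp only [Finset.mem_filter, Finset.mem_univ, true_and] at hx hy
    exact le_antisymm (hx y ⟨_, _, hxy⟩) (hy x ⟨_, _, hxy.symm⟩)
  · intro q hq
    simp only [Finset.mem_filter, Finset.mem_univ, true_and] at hq
    obtain ⟨r, hr, a, b, hab⟩ := exists_least_sameComp f q
    refine ⟨r, by simpa using hr, ?_⟩
    have hb : f^[b] q = q := Function.iterate_fixed hq b
    rw [hb] at hab
    -- The orbit of `r` passes through both fixed points, so they agree.
    rw [← iterate_add_of_fixed (ht r) a, add_comm,
      iterate_add_of_fixed (by rw [hab]; exact hq), hab]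

lemma gop_eq_replicate_iff {N : ℕ} (f : Fin N → Fin N) (j : ℕ) :
    gop f = List.replicate j 1 ↔ EvFix f ∧ Nat.card {x // f x = x} = j := by
  have key : (∀ x : Fin N, (∀ y, sameComp f x y → x ≤ y) → gopOrd f x = 1) ↔ EvFix f := by
    constructor
    · intro h x
      obtain ⟨r, hr, a, b, hab⟩ := exists_least_sameComp f x
      obtain ⟨n, hn⟩ := (gopOrd_eq_one_iff f r).1 (h r hr)
      refine ⟨n + b, ?_⟩
      have : f^[n + b] x = f^[n] r := by
        rw [Function.iterate_add_apply, ← hab, ← Function.iterate_add_apply, add_comm,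
          iterate_add_of_fixed hn]
      rw [this, hn]
    · intro h x _
      exact (gopOrd_eq_one_iff f x).2 (h x)
  unfold gop
  rw [List.eq_replicate_iff]
  simp only [List.length_map, Finset.length_sort, List.mem_map, Finset.mem_sort,
    Finset.mem_filter, Finset.mem_univ, true_and, forall_exists_index, and_imp,
    forall_apply_eq_imp_iff₂]
  rw [key, and_comm]
  refine and_congr_right fun hf => ?_
  rw [card_least_eq_card_fixed hf]

lemma A_eq (M j : ℕ) :
    A M j = Nat.card {g : Fin M → Fin M // EvFix g ∧ Nat.card {x // g x = x} = j} :=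
  Nat.card_congr (Equiv.subtypeEquivRight fun g => gop_eq_replicate_iff g j)

/-! ### Transport to other finite types -/

lemma EvFix.conj {α β : Type*} (e : α ≃ β) {f : α → α} (hf : EvFix f) :
    EvFix (e.arrowCongr e f) := by
  have hsc : Function.Semiconj e f (e.arrowCongr e f) := fun x => by simp
  intro y
  obtain ⟨n, hn⟩ := hf (e.symm y)
  refine ⟨n, ?_⟩
  have h : (e.arrowCongr e f)^[n] y = e (f^[n] (e.symm y)) := by
    rw [(hsc.iterate_right n).eq, e.apply_symm_apply]
  rw [h, ← hsc.eq, hn]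

lemma card_fixed_conj {α β : Type*} (e : α ≃ β) (f : α → α) :
    Nat.card {y // e.arrowCongr e f y = y} = Nat.card {x // f x = x} :=
  (Nat.card_congr (e.subtypeEquiv fun x => by simp)).symm

lemma A_eq_card {β : Type*} (M j : ℕ) (e : β ≃ Fin M) :
    A M j = Nat.card {g : β → β // EvFix g ∧ Nat.card {x // g x = x} = j} := by
  rw [A_eq]
  refine (Nat.card_congr ((e.arrowCongr e).subtypeEquiv fun g => ?_)).symm
  rw [card_fixed_conj]
  refine and_congr_left fun _ => ⟨fun h => h.conj e, fun h => ?_⟩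
  have h' := h.conj e.symm
  convert h' using 1
  ext x
  simp

/-! ### Gluing -/

section Glue

variable {α : Type*} (S : Finset α)

/-- The map on `α` that fixes `S` pointwise, follows `g` at the points outside `S` not fixed by
`g`, and sends the fixed points of `g` into `S` by `h`. -/
noncomputable def glueFun (g : {x // x ∉ S} → {x // x ∉ S}) (h : {y // g y = y} → S) (x : α) : α :=
  if hx : x ∈ S then x
  else if hg : g ⟨x, hx⟩ = ⟨x, hx⟩ then (h ⟨⟨x, hx⟩, hg⟩ : α) else (g ⟨x, hx⟩ : α)

variable {S} {g : {x // x ∉ S} → {x // x ∉ S}} {h : {y // g y = y} → S}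

lemma glueFun_of_mem {x : α} (hx : x ∈ S) : glueFun S g h x = x := by
  simp [glueFun, hx]

lemma glueFun_of_fixed (y : {x // x ∉ S}) (hy : g y = y) : glueFun S g h y = h ⟨y, hy⟩ := by
  simp [glueFun, y.2, hy]

lemma glueFun_of_not_fixed (y : {x // x ∉ S}) (hy : g y ≠ y) : glueFun S g h y = g y := by
  simp [glueFun, y.2, hy]

lemma glueFun_fixed_iff (x : α) : glueFun S g h x = x ↔ x ∈ S := by
  refine ⟨fun hx => ?_, glueFun_of_mem⟩
  by_contra hxS
  by_cases hg : g ⟨x, hxS⟩ = ⟨x, hxS⟩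
  · have := glueFun_of_fixed (h := h) ⟨x, hxS⟩ hg
    rw [hx] at this
    exact hxS (this ▸ (h _).2)
  · have := glueFun_of_not_fixed (h := h) ⟨x, hxS⟩ hg
    rw [hx] at this
    exact hg (Subtype.ext this.symm)

lemma evFix_glueFun (hg : EvFix g) : EvFix (glueFun S g h) := by
  have main : ∀ n : ℕ, ∀ y : {x // x ∉ S}, g (g^[n] y) = g^[n] y →
      ∃ m : ℕ, glueFun S g h ((glueFun S g h)^[m] y) = (glueFun S g h)^[m] y := by
    intro n
    induction n with
    | zero =>
      intro y hy
      refine ⟨1, ?_⟩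
      rw [Function.iterate_one, glueFun_of_fixed y hy]
      exact glueFun_of_mem (h _).2
    | succ n ih =>
      intro y hy
      by_cases hfix : g y = y
      · refine ⟨1, ?_⟩
        rw [Function.iterate_one, glueFun_of_fixed y hfix]
        exact glueFun_of_mem (h _).2
      · obtain ⟨m, hm⟩ := ih (g y) hy
        refine ⟨m + 1, ?_⟩
        rw [Function.iterate_succ_apply, glueFun_of_not_fixed y hfix]
        exact hm
  intro x
  by_cases hx : x ∈ S
  · exact ⟨0, glueFun_of_mem hx⟩
  · obtain ⟨n, hn⟩ := hg ⟨x, hx⟩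
    exact main n ⟨x, hx⟩ hn

/-- Gluing as a map from the pairs `(g, h)` to the eventually fixed functions with fixed-point set
exactly `S`. -/
noncomputable def glue (S : Finset α)
    (p : Σ g : {g : {x // x ∉ S} → {x // x ∉ S} // EvFix g}, ({y // g.1 y = y} → S)) :
    {f : α → α // EvFix f ∧ ∀ x, f x = x ↔ x ∈ S} :=
  ⟨glueFun S p.1.1 p.2, evFix_glueFun p.1.2, glueFun_fixed_iff⟩

lemma glueFun_mem_iff (y : {x // x ∉ S}) : glueFun S g h y ∈ S ↔ g y = y := by
  by_cases hy : g y = y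
  · rw [glueFun_of_fixed y hy]
    simp [hy]
  · rw [glueFun_of_not_fixed y hy]
    simp [hy, (g y).2]

lemma glue_bijective (S : Finset α) : Function.Bijective (glue S) := by
  constructor
  · rintro ⟨⟨g, hg⟩, h⟩ ⟨⟨g', hg'⟩, h'⟩ heq
    have heq : glueFun S g h = glueFun S g' h' := congrArg Subtype.val heq
    have hgg : g = g' := by
      funext y
      by_cases hy : g y = y
      · have := (glueFun_mem_iff (h := h) y).2 hy
        rw [heq, glueFun_mem_iff] at this
        rw [hy, this]
      · have hy' : g' y ≠ y := by
          rwa [ne_eq, ← glueFun_mem_iff (h := h'), ← heq, glueFun_mem_iff]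
        apply Subtype.ext
        rw [← glueFun_of_not_fixed (h := h) y hy, heq, glueFun_of_not_fixed y hy']
    subst hgg
    have hhh : h = h' := by
      funext ⟨y, hy⟩
      apply Subtype.ext
      rw [← glueFun_of_fixed (h := h) y hy, heq, glueFun_of_fixed y hy]
    subst hhh
    rfl
  · rintro ⟨f, hf, hS⟩
    let g : {x // x ∉ S} → {x // x ∉ S} := fun y => if hy : f y ∈ S then y else ⟨f y, hy⟩
    have g_pos : ∀ y : {x // x ∉ S}, f y ∈ S → g y = y := fun y hy => by simp [g, hy]
    have g_neg : ∀ y : {x // x ∉ S}, f y ∉ S → (g y : α) = f y := fun y hy => by simp [g, hy]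
    have g_fix : ∀ y : {x // x ∉ S}, g y = y → f y ∈ S := by
      intro y hy
      by_contra hfy
      have := g_neg y hfy
      rw [hy] at this
      exact y.2 ((hS y).1 this.symm)
    have hg : EvFix g := by
      have main : ∀ n : ℕ, ∀ y : {x // x ∉ S}, f^[n] y ∈ S → ∃ m : ℕ, g (g^[m] y) = g^[m] y := by
        intro n
        induction n with
        | zero => exact fun y hy => absurd hy y.2
        | succ n ih =>
          intro y hy
          by_cases hfy : f y ∈ S
          · exact ⟨0, g_pos y hfy⟩
          · rw [Function.iterate_succ_apply, ← g_neg y hfy] at hy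
            obtain ⟨m, hm⟩ := ih (g y) hy
            exact ⟨m + 1, hm⟩
      intro y
      obtain ⟨n, hn⟩ := hf y
      exact main n y ((hS _).1 hn)
    refine ⟨⟨⟨g, hg⟩, fun y => ⟨f y.1, g_fix y.1 y.2⟩⟩, Subtype.ext (funext fun x => ?_)⟩
    change glueFun S g _ x = f x
    by_cases hx : x ∈ S
    · rw [glueFun_of_mem hx, (hS x).2 hx]
    · by_cases hgx : g ⟨x, hx⟩ = ⟨x, hx⟩
      · exact glueFun_of_fixed ⟨x, hx⟩ hgx
      · rw [show glueFun S g _ x = g ⟨x, hx⟩ from glueFun_of_not_fixed ⟨x, hx⟩ hgx]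
        exact g_neg ⟨x, hx⟩ fun hfx => hgx (g_pos _ hfx)

end Glue

/-! ### Counting -/

/-- Eventually fixed functions on a nonempty type, weighted by `k` to the number of fixed points,
grouped by that number. -/
lemma sum_pow_card_fixed {β : Type*} [Fintype β] [Nonempty β] (k M : ℕ) (e : β ≃ Fin M) :
    ∑ g : {g : β → β // EvFix g}, k ^ Nat.card {y // g.1 y = y} =
      ∑ p ∈ Finset.Icc 1 M, k ^ p * A M p := by
  have hM : Nat.card β = M := by rw [Nat.card_congr e, Nat.card_fin]
  rw [← Finset.sum_fiberwise_of_maps_to (t := Finset.Icc 1 M)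
    (g := fun g : {g : β → β // EvFix g} => Nat.card {y // g.1 y = y})]
  · refine Finset.sum_congr rfl fun p _ => ?_
    rw [Finset.sum_congr rfl (g := fun _ => k ^ p)
      (fun g hg => by rw [(Finset.mem_filter.1 hg).2]), Finset.sum_const, smul_eq_mul, mul_comm,
      A_eq_card M p e, ← Fintype.card_subtype, ← Nat.card_eq_fintype_card]
    congr 1
    exact Nat.card_congr (Equiv.subtypeSubtypeEquivSubtypeInter (EvFix (α := β))
      (fun g => Nat.card {y // g y = y} = p))
  · intro g _
    rw [Finset.mem_Icc]
    constructor
    · obtain ⟨n, hn⟩ := g.2 (Classical.arbitrary β)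
      exact Nat.card_pos_iff.2 ⟨⟨⟨_, hn⟩⟩, inferInstance⟩
    · rw [← hM]
      exact Nat.card_le_card_of_injective _ Subtype.val_injective

lemma card_fixed_eq {N k : ℕ} (hkN : k < N) (S : Finset (Fin N)) (hS : S.card = k) :
    Nat.card {f : Fin N → Fin N // EvFix f ∧ ∀ x, f x = x ↔ x ∈ S} =
      ∑ p ∈ Finset.Icc 1 (N - k), k ^ p * A (N - k) p := by
  have hcard : Fintype.card {x // x ∉ S} = N - k := by
    rw [Fintype.card_subtype_compl, Fintype.card_fin, Fintype.card_coe, hS]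
  have hne : Nonempty {x // x ∉ S} := Fintype.card_pos_iff.1 (by omega)
  have hsum := sum_pow_card_fixed k (N - k) (Fintype.equivFinOfCardEq hcard)
  rw [← Nat.card_eq_of_bijective _ (glue_bijective S), Nat.card_sigma, ← hsum]
  -- The two sums use different `Fintype` instances, so their index sets agree only extensionally.
  refine Finset.sum_congr (Finset.ext fun g => by simp only [Finset.mem_univ]) fun g _ => ?_
  rw [Nat.card_fun, Nat.card_eq_fintype_card (α := S), Fintype.card_coe, hS]

/-- Functions with `k` fixed points, sorted by their fixed-point set. -/
lemma card_sortByFixed (N k : ℕ) :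
    Nat.card {f : Fin N → Fin N // EvFix f ∧ Nat.card {x // f x = x} = k} =
      Nat.card (Σ S : {S : Finset (Fin N) // S.card = k},
        {f : Fin N → Fin N // EvFix f ∧ ∀ x, f x = x ↔ x ∈ S.1}) := by
  let F : (Σ S : {S : Finset (Fin N) // S.card = k},
        {f : Fin N → Fin N // EvFix f ∧ ∀ x, f x = x ↔ x ∈ S.1}) →
      {f : Fin N → Fin N // EvFix f ∧ Nat.card {x // f x = x} = k} :=
    fun p => ⟨p.2.1, p.2.2.1, by
      rw [Nat.card_congr (Equiv.subtypeEquivRight p.2.2.2), Nat.card_eq_fintype_card,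
        Fintype.card_coe, p.1.2]⟩
  refine (Nat.card_eq_of_bijective F ⟨?_, ?_⟩).symm
  · rintro ⟨⟨S, hS⟩, f, hf, hfS⟩ ⟨⟨S', hS'⟩, f', hf', hfS'⟩ h
    obtain rfl : f = f' := congrArg Subtype.val h
    obtain rfl : S = S' := by
      ext x
      rw [← hfS, ← hfS']
    rfl
  · rintro ⟨f, hf, hk⟩
    have hk' := hk
    rw [Nat.card_eq_fintype_card, Fintype.card_subtype] at hk'
    exact ⟨⟨⟨Finset.univ.filter fun x => f x = x, hk'⟩, f, hf, fun x => by simp⟩, rfl⟩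

/-- for `1 ≤ k ≤ N−1`,
`A_N(k) = C(N, k) · Σ_{p=1}^{N−k} k^p · A_{N−k}(p)`. -/
theorem A_recursion (N k : ℕ) (hk : 1 ≤ k) (hkN : k ≤ N - 1) :
    A N k = N.choose k * ∑ p ∈ Finset.Icc 1 (N - k), k ^ p * A (N - k) p := by
  rw [A_eq, card_sortByFixed, Nat.card_sigma,
    Finset.sum_congr rfl fun S _ => card_fixed_eq (by omega) S.1 S.2, Finset.sum_const,
    smul_eq_mul, Finset.card_univ, Fintype.card_finset_len, Fintype.card_fin]
end

section
/- For every positive integer k with k ≤ N−1, the number of functions f ∈ F_N with global orbit pattern [k, 1] equals the number of functions f ∈ F_N with global orbit pattern [k+1]. -/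
/-!
The count is bijective, by composing with a transposition.  Let `f` have pattern `[k, 1]`, let `c`
be the first periodic point on the orbit of `0`, and let `a` be the fixed point lying in the other
component.  Then `g = f ∘ swap c a` inserts `a` into the cycle of `c` directly after `c`, so that
`g` has a single cycle, of length `k + 1`.  Conversely, if `g` has pattern `[k + 1]`, let `c` be the
first periodic point on the orbit of `0` and `a = g c`; then `g ∘ swap c a` cuts `a` out of the
cycle as a fixed point, leaving a cycle of length `k`.

The two operations are mutually inverse because composing with the transposition of two periodic
points does not change the set of periodic points (`periodicPts_comp_swap`): both maps permute this
set.  Hence the orbit of `0` up to its first periodic point `c` is unchanged as well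
(`IsEntry.comp_swap`).  The patterns `[k, 1]` and `[k + 1]` are translated into statements
`PatTwo`, `PatOne` about `f`, `c`, `a` and the set of periodic points (`gop_eq_two_iff`,
`gop_eq_one_iff`), where cycle lengths are read off from the number of periodic points, and
`patTwo_iff` says that the involution `(f, c, a) ↦ (f ∘ swap c a, c, a)` exchanges the two.
-/

open scoped Classical

open Function

/-- `c` is the first periodic point on the forward orbit of `x` under `f`. -/
def IsEntry {N : ℕ} (f : Fin N → Fin N) (x c : Fin N) : Prop :=
  c ∈ periodicPts f ∧ ∃ n, f^[n] x = c ∧ ∀ i < n, f^[i] x ∉ periodicPts f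

/-- The orbit of `0` enters its cycle at `c`, the point `a ≠ c` is fixed, the periodic points other
than `a` form the cycle of `c`, and there are `k + 1` periodic points.  This is the pattern
`[k, 1]`. -/
def PatTwo {n : ℕ} (k : ℕ) (f : Fin (n + 1) → Fin (n + 1)) (c a : Fin (n + 1)) : Prop :=
  IsEntry f 0 c ∧ c ≠ a ∧ f a = a ∧ (∀ x ∈ periodicPts f, x ≠ a → ∃ j, f^[j] c = x) ∧
    (periodicPts f).ncard = k + 1

/-- The orbit of `0` enters its cycle at `c`, the next point of the cycle is `a ≠ c`, this is the
only cycle, and there are `k + 1` periodic points.  For `k ≥ 1` this is the pattern `[k + 1]`. -/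
def PatOne {n : ℕ} (k : ℕ) (f : Fin (n + 1) → Fin (n + 1)) (c a : Fin (n + 1)) : Prop :=
  IsEntry f 0 c ∧ c ≠ a ∧ f c = a ∧ (∀ x ∈ periodicPts f, ∃ j, f^[j] c = x) ∧
    (periodicPts f).ncard = k + 1

/-! ### Periodic points, entry points and orders -/

section Basic

variable {N : ℕ} {f : Fin N → Fin N}

lemma iterate_mem_periodicPts {x : Fin N} (hx : x ∈ periodicPts f) (j : ℕ) :
    f^[j] x ∈ periodicPts f :=
  ((bijOn_periodicPts f).mapsTo.iterate j) hx

lemma exists_isEntry (f : Fin N → Fin N) (x : Fin N) : ∃ c, IsEntry f x c := by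
  have h : ∃ n, f^[n] x ∈ periodicPts f := by
    obtain ⟨m, n, hmn, h⟩ := Finite.exists_ne_map_eq_of_infinite (fun n : ℕ => f^[n] x)
    wlog hlt : m < n generalizing m n
    · exact this n m hmn.symm h.symm (by omega)
    refine ⟨m, mk_mem_periodicPts (n := n - m) (by omega) ?_⟩
    change f^[n - m] (f^[m] x) = f^[m] x
    rw [← iterate_add_apply, Nat.sub_add_cancel hlt.le]
    exact h.symm
  exact ⟨_, Nat.find_spec h, _, rfl, fun i hi => Nat.find_min h hi⟩

lemma IsEntry.unique {x c d : Fin N} (hc : IsEntry f x c) (hd : IsEntry f x d) : c = d := by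
  obtain ⟨hc, m, rfl, hm⟩ := hc
  obtain ⟨hd, n, rfl, hn⟩ := hd
  rcases lt_trichotomy m n with h | h | h
  · exact absurd hc (hn _ h)
  · rw [h]
  · exact absurd hd (hm _ h)

lemma IsEntry.sameComp {x c : Fin N} (hc : IsEntry f x c) : sameComp f x c := by
  obtain ⟨-, m, h, -⟩ := hc
  exact ⟨m, 0, h⟩

lemma sameComp.symm {x y : Fin N} (h : sameComp f x y) : sameComp f y x := by
  obtain ⟨k, l, h⟩ := h
  exact ⟨l, k, h.symm⟩

lemma sameComp.trans {x y z : Fin N} (h : sameComp f x y) (h' : sameComp f y z) :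
    sameComp f x z := by
  obtain ⟨k, l, h⟩ := h
  obtain ⟨m, n, h'⟩ := h'
  refine ⟨m + k, l + n, ?_⟩
  rw [iterate_add_apply, h, ← iterate_add_apply, add_comm m l, iterate_add_apply, h',
    ← iterate_add_apply]

/-- A periodic point in the component of a point `c` lies on the forward orbit of `c`. -/
lemma sameComp.exists_iterate {c x : Fin N} (hx : x ∈ periodicPts f) (h : sameComp f c x) :
    ∃ j, f^[j] c = x := by
  obtain ⟨k, l, h⟩ := h
  obtain ⟨p, hp, hx⟩ := hx
  -- `l * p - l` further steps complete `l` turns around the cycle of `x`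
  refine ⟨(l * p - l) + k, ?_⟩
  have : l ≤ l * p := Nat.le_mul_of_pos_right l hp
  rw [iterate_add_apply, h, ← iterate_add_apply, Nat.sub_add_cancel this]
  exact hx.const_mul l

lemma gopOrd_eq {x c : Fin N} (hc : c ∈ periodicPts f) (h : sameComp f x c) :
    gopOrd f x = minimalPeriod f c := by
  obtain ⟨n, rfl⟩ := h.exists_iterate hc
  have hmem : minimalPeriod f (f^[n] x) ∈ {p : ℕ | 0 < p ∧ ∃ K : ℕ, f^[K + p] x = f^[K] x} := by
    refine ⟨minimalPeriod_pos_of_mem_periodicPts hc, n, ?_⟩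
    rw [add_comm, iterate_add_apply]
    exact isPeriodicPt_minimalPeriod f _
  refine le_antisymm (Nat.sInf_le hmem) (le_csInf ⟨_, hmem⟩ ?_)
  rintro p ⟨hp, K, hK⟩
  rw [← minimalPeriod_apply_iterate hc K]
  refine IsPeriodicPt.minimalPeriod_le hp ?_
  change f^[p] (f^[K] (f^[n] x)) = f^[K] (f^[n] x)
  rw [← iterate_add_apply, ← iterate_add_apply, ← iterate_add_apply,
    show p + K + n = n + (K + p) by ring, iterate_add_apply, hK, ← iterate_add_apply,
    add_comm n K]

lemma ncard_orbit {c : Fin N} (hc : c ∈ periodicPts f) :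
    {x | ∃ j, f^[j] c = x}.ncard = minimalPeriod f c := by
  have h : {x | ∃ j, f^[j] c = x} = (fun j => f^[j] c) '' Set.Iio (minimalPeriod f c) := by
    ext x
    constructor
    · rintro ⟨j, rfl⟩
      exact ⟨j % minimalPeriod f c, Nat.mod_lt _ (minimalPeriod_pos_of_mem_periodicPts hc),
        iterate_mod_minimalPeriod_eq⟩
    · rintro ⟨j, -, rfl⟩
      exact ⟨j, rfl⟩
  rw [h, iterate_injOn_Iio_minimalPeriod.ncard_image]
  simp [Set.ncard_eq_toFinset_card']

lemma mem_periodicPts_of_fixed {a : Fin N} (ha : f a = a) : a ∈ periodicPts f :=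
  ⟨1, one_pos, ha⟩

/-- A fixed point is not reached from any other periodic point. -/
lemma eq_of_iterate_eq_fixed {c a : Fin N} (hc : c ∈ periodicPts f) (ha : f a = a)
    (h : sameComp f c a) : c = a := by
  obtain ⟨j, hj⟩ := h.symm.exists_iterate hc
  rw [← hj, iterate_fixed ha]

end Basic

/-! ### Composition with a transposition -/

section Swap

variable {N : ℕ} {f : Fin N → Fin N}

lemma periodicPts_subset_comp_swap {c a : Fin N} (hc : c ∈ periodicPts f)
    (ha : a ∈ periodicPts f) : periodicPts f ⊆ periodicPts (f ∘ Equiv.swap c a) := by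
  have hsw : Set.MapsTo (Equiv.swap c a) (periodicPts f) (periodicPts f) := by
    intro x hx
    rw [Equiv.swap_apply_def]
    split_ifs <;> assumption
  have hmaps := (bijOn_periodicPts f).mapsTo.comp hsw
  have hinj : Set.InjOn (f ∘ Equiv.swap c a) (periodicPts f) :=
    (bijOn_periodicPts f).injOn.comp (Equiv.injective _).injOn hsw
  intro x hx
  obtain ⟨p, hp, h⟩ := (hmaps.restrict_inj.2 hinj).mem_periodicPts ⟨x, hx⟩
  exact ⟨p, hp, h.map (g := Subtype.val) (fun _ => rfl)⟩

lemma comp_swap_comp_swap (f : Fin N → Fin N) (c a : Fin N) :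
    (f ∘ Equiv.swap c a) ∘ Equiv.swap c a = f := by
  ext x
  simp

/-- Both `f` and `f ∘ swap c a` permute the finite set of periodic points of either map. -/
lemma periodicPts_comp_swap {c a : Fin N} (hc : c ∈ periodicPts f) (ha : a ∈ periodicPts f) :
    periodicPts (f ∘ Equiv.swap c a) = periodicPts f := by
  have h := periodicPts_subset_comp_swap hc ha
  refine Set.Subset.antisymm ?_ h
  have h' := periodicPts_subset_comp_swap (h hc) (h ha)
  rwa [comp_swap_comp_swap] at h'

lemma comp_swap_of_ne {c a x : Fin N} (hc : x ≠ c) (ha : x ≠ a) :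
    (f ∘ Equiv.swap c a) x = f x := by
  simp [Equiv.swap_apply_of_ne_of_ne hc ha]

lemma IsEntry.comp_swap {c a x : Fin N} (h : IsEntry f x c) (ha : a ∈ periodicPts f) :
    IsEntry (f ∘ Equiv.swap c a) x c := by
  obtain ⟨hc, n, hn, hlt⟩ := h
  have hit : ∀ i ≤ n, (f ∘ Equiv.swap c a)^[i] x = f^[i] x := by
    intro i
    induction i with
    | zero => simp
    | succ i ih =>
      intro hi
      have hP := hlt i hi
      rw [iterate_succ_apply', iterate_succ_apply', ih (by omega)]
      exact comp_swap_of_ne (fun h => hP (h ▸ hc)) (fun h => hP (h ▸ ha))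
  rw [IsEntry, periodicPts_comp_swap hc ha]
  exact ⟨hc, n, by rw [hit n le_rfl, hn], fun i hi => by rw [hit i hi.le]; exact hlt i hi⟩

end Swap

/-! ### Merging and splitting cycles -/

section Patterns

variable {n k : ℕ} {f : Fin (n + 1) → Fin (n + 1)} {c a : Fin (n + 1)}

lemma PatTwo.patOne (h : PatTwo k f c a) : PatOne k (f ∘ Equiv.swap c a) c a := by
  obtain ⟨hc, hne, ha, horb, hcard⟩ := h
  have haP := mem_periodicPts_of_fixed ha
  have hP := periodicPts_comp_swap hc.1 haP
  have hgc : (f ∘ Equiv.swap c a) c = a := by simp [ha]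
  have hga : (f ∘ Equiv.swap c a) a = f c := by simp
  refine ⟨hc.comp_swap haP, hne, hgc, ?_, by rw [hP, hcard]⟩
  rw [hP]
  have key : ∀ j, ∃ i, (f ∘ Equiv.swap c a)^[i] c = f^[j] c := by
    intro j
    induction j with
    | zero => exact ⟨0, rfl⟩
    | succ j ih =>
      obtain ⟨i, hi⟩ := ih
      rw [iterate_succ_apply']
      by_cases h1 : f^[j] c = c
      · -- the step `c ↦ f c` of `f` becomes the two steps `c ↦ a ↦ f c`
        exact ⟨2, by rw [h1, iterate_succ_apply', iterate_one, hgc, hga]⟩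
      by_cases h2 : f^[j] c = a
      · exact ⟨1, by rw [h2, iterate_one, hgc, ha]⟩
      exact ⟨i + 1, by rw [iterate_succ_apply', hi, comp_swap_of_ne h1 h2]⟩
  intro x hx
  by_cases hxa : x = a
  · exact ⟨1, by rw [hxa, iterate_one, hgc]⟩
  obtain ⟨j, rfl⟩ := horb x hx hxa
  exact key j

lemma PatOne.patTwo (h : PatOne k f c a) : PatTwo k (f ∘ Equiv.swap c a) c a := by
  obtain ⟨hc, hne, hfc, horb, hcard⟩ := h
  have haP : a ∈ periodicPts f := hfc ▸ iterate_mem_periodicPts hc.1 1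
  have hP := periodicPts_comp_swap hc.1 haP
  have hga : (f ∘ Equiv.swap c a) a = a := by simp [hfc]
  have hgc : (f ∘ Equiv.swap c a) c = f a := by simp
  refine ⟨hc.comp_swap haP, hne, hga, ?_, by rw [hP, hcard]⟩
  rw [hP]
  have key : ∀ j, f^[j] c ≠ a → ∃ i, (f ∘ Equiv.swap c a)^[i] c = f^[j] c := by
    intro j
    induction j with
    | zero => exact fun _ => ⟨0, rfl⟩
    | succ j ih =>
      rw [iterate_succ_apply']
      intro hja
      by_cases h2 : f^[j] c = a
      · exact ⟨1, by rw [h2, iterate_one, hgc]⟩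
      by_cases h1 : f^[j] c = c
      · exact absurd (by rw [h1, hfc]) hja
      obtain ⟨i, hi⟩ := ih h2
      exact ⟨i + 1, by rw [iterate_succ_apply', hi, comp_swap_of_ne h1 h2]⟩
  intro x hx hxa
  obtain ⟨j, rfl⟩ := horb x hx
  exact key j hxa

lemma patTwo_iff : PatTwo k f c a ↔ PatOne k (f ∘ Equiv.swap c a) c a := by
  refine ⟨PatTwo.patOne, fun h => ?_⟩
  have := h.patTwo
  rwa [comp_swap_comp_swap] at this

lemma PatOne.unique {c' a' : Fin (n + 1)} (h : PatOne k f c a) (h' : PatOne k f c' a') :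
    c = c' ∧ a = a' := by
  have hc := h.1.unique h'.1
  exact ⟨hc, by rw [← h.2.2.1, ← h'.2.2.1, hc]⟩

lemma PatTwo.unique {c' a' : Fin (n + 1)} (h : PatTwo k f c a) (h' : PatTwo k f c' a') :
    c = c' ∧ a = a' := by
  obtain rfl := h.1.unique h'.1
  refine ⟨rfl, ?_⟩
  by_contra hne
  obtain ⟨j, hj⟩ := h.2.2.2.1 a' (mem_periodicPts_of_fixed h'.2.2.1) (Ne.symm hne)
  exact h'.2.1 (eq_of_iterate_eq_fixed h'.1.1 h'.2.2.1 ⟨j, 0, hj⟩)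

/-! ### Reading the patterns off the list of orders -/

/-- The set of least elements of the components of `f`. -/
noncomputable def compMins (f : Fin (n + 1) → Fin (n + 1)) : Finset (Fin (n + 1)) :=
  Finset.univ.filter (fun x => ∀ y, sameComp f x y → x ≤ y)

lemma gop_eq (f : Fin (n + 1) → Fin (n + 1)) :
    gop f = ((compMins f).sort (· ≤ ·)).map (gopOrd f) := rfl

lemma mem_compMins {x : Fin (n + 1)} : x ∈ compMins f ↔ ∀ y, sameComp f x y → x ≤ y := by
  simp [compMins]

lemma zero_mem_compMins : (0 : Fin (n + 1)) ∈ compMins f :=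
  mem_compMins.2 fun _ _ => Fin.zero_le _

lemma exists_mem_compMins (f : Fin (n + 1) → Fin (n + 1)) (x : Fin (n + 1)) :
    ∃ b ∈ compMins f, sameComp f x b := by
  obtain ⟨b, hb, hmin⟩ := Set.exists_min_image {y | sameComp f x y} id (Set.toFinite _)
    ⟨x, 0, 0, rfl⟩
  exact ⟨b, mem_compMins.2 fun y hy => hmin y (sameComp.trans hb hy), hb⟩

lemma eq_of_mem_compMins {x y : Fin (n + 1)} (hx : x ∈ compMins f) (hy : y ∈ compMins f)
    (h : sameComp f x y) : x = y :=
  le_antisymm (mem_compMins.1 hx y h) (mem_compMins.1 hy x h.symm)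

lemma gop_eq_singleton_iff {m : ℕ} :
    gop f = [m] ↔ compMins f = {0} ∧ gopOrd f 0 = m := by
  rw [gop_eq]
  constructor
  · intro h
    obtain ⟨x, hx, hm⟩ := List.map_eq_singleton_iff.1 h
    have hM : compMins f = {x} := by
      rw [← Finset.sort_toFinset (compMins f) (· ≤ ·), hx]; simp
    have h0 : (0 : Fin (n + 1)) ∈ compMins f := zero_mem_compMins
    rw [hM, Finset.mem_singleton] at h0
    exact ⟨by rw [hM, h0], by rw [h0, hm]⟩
  · rintro ⟨h, hm⟩
    rw [h]; simp [hm]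

lemma gop_eq_pair_iff {l m : ℕ} :
    gop f = [l, m] ↔ ∃ b, b ≠ 0 ∧ compMins f = {0, b} ∧ gopOrd f 0 = l ∧ gopOrd f b = m := by
  rw [gop_eq]
  constructor
  · intro h
    have hlen := congrArg List.length h
    simp only [List.length_map, List.length_cons, List.length_nil] at hlen
    obtain ⟨x, y, hxy⟩ := List.length_eq_two.1 hlen
    have hM : compMins f = {x, y} := by
      rw [← Finset.sort_toFinset (compMins f) (· ≤ ·), hxy]; simp
    have hle : x ≤ y := by
      have := Finset.pairwise_sort (compMins f) (· ≤ ·)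
      rw [hxy] at this
      simpa using this
    have hne : x ≠ y := by
      have := Finset.sort_nodup (compMins f) (· ≤ ·)
      rw [hxy] at this
      simpa using this
    have h0 : (0 : Fin (n + 1)) ∈ compMins f := zero_mem_compMins
    have hx0 : x = 0 := by
      rw [hM, Finset.mem_insert, Finset.mem_singleton] at h0
      rcases h0 with h0 | h0
      · exact h0.symm
      · exact le_antisymm (h0 ▸ hle) (Fin.zero_le _)
    subst hx0
    rw [hxy] at h
    simp only [List.map_cons, List.map_nil, List.cons.injEq, and_true] at h
    exact ⟨y, hne.symm, hM, h.1, h.2⟩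
  · rintro ⟨b, hb, hM, rfl, rfl⟩
    rw [hM, Finset.sort_insert]
    · simp
    · simp
    · simpa using hb.symm

lemma gop_eq_one_iff (hk : 1 ≤ k) : gop f = [k + 1] ↔ ∃ c a, PatOne k f c a := by
  rw [gop_eq_singleton_iff]
  constructor
  · rintro ⟨hM, hord⟩
    obtain ⟨c, hc⟩ := exists_isEntry f 0
    have horb : ∀ x ∈ periodicPts f, ∃ j, f^[j] c = x := by
      intro x hx
      obtain ⟨b, hb, hxb⟩ := exists_mem_compMins f x
      rw [hM, Finset.mem_singleton] at hb
      subst hb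
      exact (hc.sameComp.symm.trans hxb.symm).exists_iterate hx
    rw [gopOrd_eq hc.1 hc.sameComp] at hord
    refine ⟨c, f c, hc, ?_, rfl, horb, ?_⟩
    · intro h
      have := IsPeriodicPt.minimalPeriod_le one_pos (show IsPeriodicPt f 1 c from h.symm)
      omega
    · rw [← hord, ← ncard_orbit hc.1]
      congr 1
      ext x
      exact ⟨horb x, by rintro ⟨j, rfl⟩; exact iterate_mem_periodicPts hc.1 j⟩
  · rintro ⟨c, a, hc, hne, hfc, horb, hcard⟩
    constructor
    · ext b
      rw [Finset.mem_singleton]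
      refine ⟨fun hb => ?_, fun h => h ▸ zero_mem_compMins⟩
      obtain ⟨d, hd⟩ := exists_isEntry f b
      obtain ⟨j, hj⟩ := horb d hd.1
      exact eq_of_mem_compMins hb zero_mem_compMins
        (hd.sameComp.trans (sameComp.trans ⟨0, j, hj.symm⟩ hc.sameComp.symm))
    · rw [gopOrd_eq hc.1 hc.sameComp, ← hcard, ← ncard_orbit hc.1]
      congr 1
      ext x
      exact ⟨by rintro ⟨j, rfl⟩; exact iterate_mem_periodicPts hc.1 j, horb x⟩

/-- If the periodic points are the cycle of `c` and one further fixed point `a`, then their number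
exceeds the length of the cycle by one. -/
lemma ncard_periodicPts_eq (hc : c ∈ periodicPts f) (hne : c ≠ a) (ha : f a = a)
    (horb : ∀ x ∈ periodicPts f, x ≠ a → ∃ j, f^[j] c = x) :
    (periodicPts f).ncard = minimalPeriod f c + 1 := by
  have h : periodicPts f = insert a {x | ∃ j, f^[j] c = x} := by
    ext x
    constructor
    · intro hx
      by_cases hxa : x = a
      · exact Or.inl hxa
      · exact Or.inr (horb x hx hxa)
    · rintro (rfl | ⟨j, rfl⟩)
      · exact mem_periodicPts_of_fixed ha
      · exact iterate_mem_periodicPts hc j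
  rw [h, Set.ncard_insert_of_notMem, ncard_orbit hc]
  rintro ⟨j, hj⟩
  exact hne (eq_of_iterate_eq_fixed hc ha ⟨j, 0, hj⟩)

lemma gop_eq_two_iff : gop f = [k, 1] ↔ ∃ c a, PatTwo k f c a := by
  rw [gop_eq_pair_iff]
  constructor
  · rintro ⟨b, hb0, hM, hord, hordb⟩
    obtain ⟨c, hc⟩ := exists_isEntry f 0
    obtain ⟨a, ha⟩ := exists_isEntry f b
    rw [gopOrd_eq hc.1 hc.sameComp] at hord
    rw [gopOrd_eq ha.1 ha.sameComp] at hordb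
    have hfa : f a = a := minimalPeriod_eq_one_iff_isFixedPt.1 hordb
    have hne : c ≠ a := by
      rintro rfl
      exact hb0 (eq_of_mem_compMins (by simp [hM]) zero_mem_compMins
        (ha.sameComp.trans hc.sameComp.symm))
    have horb : ∀ x ∈ periodicPts f, x ≠ a → ∃ j, f^[j] c = x := by
      intro x hx hxa
      obtain ⟨d, hd, hxd⟩ := exists_mem_compMins f x
      rw [hM, Finset.mem_insert, Finset.mem_singleton] at hd
      rcases hd with rfl | rfl
      · exact (hc.sameComp.symm.trans hxd.symm).exists_iterate hx
      · exact absurd (eq_of_iterate_eq_fixed hx hfa (hxd.trans ha.sameComp)) hxa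
    exact ⟨c, a, hc, hne, hfa, horb, by rw [ncard_periodicPts_eq hc.1 hne hfa horb, hord]⟩
  · rintro ⟨c, a, hc, hne, ha, horb, hcard⟩
    obtain ⟨b, hb, hab⟩ := exists_mem_compMins f a
    have haP := mem_periodicPts_of_fixed ha
    refine ⟨b, ?_, ?_, ?_, ?_⟩
    · rintro rfl
      exact hne (eq_of_iterate_eq_fixed hc.1 ha (hab.trans hc.sameComp).symm)
    · ext x
      rw [Finset.mem_insert, Finset.mem_singleton]
      constructor
      · intro hx
        obtain ⟨d, hd⟩ := exists_isEntry f x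
        by_cases hda : d = a
        · exact Or.inr (eq_of_mem_compMins hx hb (hd.sameComp.trans (hda ▸ hab)))
        · obtain ⟨j, hj⟩ := horb d hd.1 hda
          exact Or.inl (eq_of_mem_compMins hx zero_mem_compMins
            (hd.sameComp.trans (sameComp.trans ⟨0, j, hj.symm⟩ hc.sameComp.symm)))
      · rintro (rfl | rfl)
        · exact zero_mem_compMins
        · exact hb
    · have := ncard_periodicPts_eq hc.1 hne ha horb
      rw [gopOrd_eq hc.1 hc.sameComp]
      omega
    · rw [gopOrd_eq haP hab.symm]
      exact minimalPeriod_eq_one_iff_isFixedPt.2 ha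

end Patterns

/-! ### The bijection -/

/-- Functions having a witness pair `(c, a)` may be counted together with it if it is unique. -/
lemma card_eq_card_triples {α : Type*} {Q : (α → α) → Prop} {R : (α → α) → α → α → Prop}
    (hQ : ∀ f, Q f ↔ ∃ c a, R f c a)
    (huniq : ∀ f c a c' a', R f c a → R f c' a' → c = c' ∧ a = a') :
    Nat.card {f // Q f} = Nat.card {t : (α → α) × α × α // R t.1 t.2.1 t.2.2} := by
  symm
  refine Nat.card_congr (Equiv.ofBijective
    (fun t => ⟨t.1.1, (hQ _).2 ⟨t.1.2.1, t.1.2.2, t.2⟩⟩) ⟨?_, ?_⟩)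
  · rintro ⟨⟨f, c, a⟩, h⟩ ⟨⟨f', c', a'⟩, h'⟩ heq
    obtain rfl : f = f' := congrArg Subtype.val heq
    obtain ⟨rfl, rfl⟩ := huniq f c a c' a' h h'
    rfl
  · rintro ⟨f, hf⟩
    obtain ⟨c, a, h⟩ := (hQ f).1 hf
    exact ⟨⟨(f, c, a), h⟩, rfl⟩

/-- for every positive integer `k ≤ N−1`, the number of `f ∈ F_N` with
global orbit pattern `[k, 1]` equals the number of `f ∈ F_N` with global orbit pattern
`[k+1]`. -/
theorem card_gop_k_one_eq_card_gop_succ (N k : ℕ) (hk : 1 ≤ k) (hkN : k ≤ N - 1) :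
    Nat.card {f : Fin N → Fin N // gop f = [k, 1]}
      = Nat.card {f : Fin N → Fin N // gop f = [k + 1]} := by
  obtain ⟨n, rfl⟩ : ∃ n, N = n + 1 := ⟨N - 1, by omega⟩
  rw [card_eq_card_triples (fun f => gop_eq_two_iff) (fun _ _ _ _ _ => PatTwo.unique),
    card_eq_card_triples (fun f => gop_eq_one_iff hk) (fun _ _ _ _ _ => PatOne.unique)]
  have hinv : Involutive (fun t : (Fin (n + 1) → Fin (n + 1)) × Fin (n + 1) × Fin (n + 1) =>
      (t.1 ∘ Equiv.swap t.2.1 t.2.2, t.2)) := by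
    rintro ⟨f, c, a⟩
    exact Prod.ext (comp_swap_comp_swap f c a) rfl
  exact Nat.card_congr (hinv.toPerm.subtypeEquiv fun _ => patTwo_iff)
end
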